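/- Let (X, Σ) be a measurable space, let μ be a finite (nonnegative) measure on X, and let C be an outer measure on X. Then there exists a set A ∈ Σ with C(A) = 0 such that, setting μ_s = μ restricted to A and μ_d = μ restricted to X ∖ A, one has: μ = μ_d + μ_s, μ_s is concentrated on the C-null set A, and μ_d(E) = 0 for every E ∈ Σ with C(E) = 0. Moreover the decomposition is unique: if μ = ν_d + ν_s where ν_d and ν_s are finite measures, ν_d(E) = 0 for every E ∈ Σ with C(E) = 0, and ν_s is concentrated on some B ∈ Σ with C(B) = 0, then ν_d = μ_d and ν_s = μ_s. -/

import Mathlib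

open MeasureTheory

/-- Abstract decomposition of a finite measure with respect to an outer measure
("capacity") `C`: `μ` splits uniquely as the sum of a part that vanishes on all
`C`-null measurable sets and a part concentrated on a `C`-null measurable set. -/
theorem measure_decomposition_diffuse_singular
    {X : Type*} [MeasurableSpace X] (μ : Measure X) [IsFiniteMeasure μ]
    (C : MeasureTheory.OuterMeasure X) :
    ∃ A : Set X, MeasurableSet A ∧ C A = 0 ∧
      μ = μ.restrict Aᶜ + μ.restrict A ∧
      (μ.restrict A).restrict A = μ.restrict A ∧
      (∀ E : Set X, MeasurableSet E → C E = 0 → μ.restrict Aᶜ E = 0) ∧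
      (∀ νd νs : Measure X, IsFiniteMeasure νd → IsFiniteMeasure νs →
        (∀ E : Set X, MeasurableSet E → C E = 0 → νd E = 0) →
        (∃ B : Set X, MeasurableSet B ∧ C B = 0 ∧ νs.restrict B = νs) →
        μ = νd + νs → νd = μ.restrict Aᶜ ∧ νs = μ.restrict A) := by
  obtain ⟨A, hA, hCA, hmax⟩ : ∃ A : Set X, MeasurableSet A ∧ C A = 0 ∧
      ∀ E : Set X, MeasurableSet E → C E = 0 → μ E ≤ μ A := by
    have hne : (Set.image μ {E : Set X | MeasurableSet E ∧ C E = 0}).Nonempty :=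
      ⟨μ ∅, ∅, ⟨MeasurableSet.empty, measure_empty⟩, rfl⟩
    obtain ⟨u, -, hu, hmem⟩ := exists_seq_tendsto_sSup hne (OrderTop.bddAbove _)
    choose F hF hFu using hmem
    refine ⟨⋃ n, F n, MeasurableSet.iUnion fun n => (hF n).1,
      measure_iUnion_null fun n => (hF n).2, fun E hE hCE => ?_⟩
    have hmemE : μ E ∈ Set.image μ {E : Set X | MeasurableSet E ∧ C E = 0} := ⟨E, ⟨hE, hCE⟩, rfl⟩
    refine (le_sSup hmemE).trans ?_
    refine le_of_tendsto' hu fun n => ?_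
    rw [← hFu n]
    exact measure_mono (Set.subset_iUnion F n)
  have hdiff : ∀ E : Set X, MeasurableSet E → C E = 0 → μ.restrict Aᶜ E = 0 := by
    intro E hE hCE
    rw [Measure.restrict_apply hE, ← Set.sdiff_eq]
    have h1 := hmax (A ∪ E) (hA.union hE) (measure_union_null hCA hCE)
    rw [← Set.union_sdiff_self, measure_union Set.disjoint_sdiff_right (hE.diff hA)] at h1
    have h2 : μ A + μ (E \ A) ≤ μ A + 0 := by simpa using h1
    exact le_antisymm ((ENNReal.add_le_add_iff_left (measure_ne_top μ A)).1 h2) (zero_le)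
  refine ⟨A, hA, hCA, ?_, ?_, hdiff, ?_⟩
  · rw [add_comm, Measure.restrict_add_restrict_compl hA]
  · rw [Measure.restrict_restrict hA, Set.inter_self]
  · rintro νd νs _ _ hd ⟨B, hB, hCB, hνB⟩ hμ
    have hdA : νd.restrict A = 0 := Measure.restrict_eq_zero.2 (hd A hA hCA)
    have hsA : νs.restrict Aᶜ = 0 := by
      rw [Measure.restrict_eq_zero, ← hνB, Measure.restrict_apply hA.compl, Set.inter_comm]
      have h := hdiff B hB hCB
      rw [Measure.restrict_apply hB, hμ, Measure.add_apply] at h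
      exact (add_eq_zero.1 h).2
    have h1 := Measure.restrict_add_restrict_compl (μ := νd) hA
    have h2 := Measure.restrict_add_restrict_compl (μ := νs) hA
    rw [hdA, zero_add] at h1
    rw [hsA, add_zero] at h2
    rw [hμ, Measure.restrict_add, Measure.restrict_add, hdA, hsA, h1, h2, zero_add, add_zero]
    exact ⟨rfl, rfl⟩
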